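/- arXiv:2004.05984 — 3 statements merged into one kernel-verified Lean document; each statement's English description precedes it below -/
import Mathlib

section
/- Let δ ∈ (0,1) be sufficiently small, σ > 1, and θ₀, θ′ > 0. Then there exists a constant C > 0 such that for every integer k ≥ 1 (and similarly k ≤ −1), every η ∈ ℤ, every integer p ≥ 2 and every t > 0, the following sum over sextets is bounded: Σ_{(k₁,η₁,p₁,k₂,η₂,p₂): k₁+k₂=k, η₁+η₂=η, p₁+p₂=p, k₁≠0, p₁,p₂≥1} ∫₀ᵗ (t−s) · e^{−θ₀(s^{−δ} − t^{−δ})⟨k,η,p,kt⟩} · e^{−θ₀(p₁^{−δ} − p^{−δ})⟨k₁,η₁,p₁,k₁s⟩} · e^{−θ₀(p₂^{−δ} − p^{−δ})⟨k₂,η₂,p₂,kt − k₁s⟩} · ⟨s⟩^{−σ} ds ≤ C ⟨t⟩^{−σ}, with C depending only on δ, σ, θ₀, θ′ and not on k, η, p, t. -/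
open MeasureTheory

/-- Japanese bracket of four real numbers: `⟨a,b,c,d⟩ = √(1+a²+b²+c²+d²)`. -/
noncomputable def jb4 (a b c d : ℝ) : ℝ := Real.sqrt (1 + a ^ 2 + b ^ 2 + c ^ 2 + d ^ 2)

/-- The summand in the echo-summation estimate: for a sextet
`(k₁,η₁,p₁, k−k₁, η−η₁, p−p₁)` with `k₁ ≠ 0`, the time integral of the product of the
three exponential gain factors coming from the monotonicity of `λ_p(t)`. -/
noncomputable def echoTerm (δ σ θ₀ : ℝ) (k η : ℤ) (p : ℕ) (t : ℝ) (z : ℤ × ℤ) (p₁ : ℕ) : ℝ :=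
  if z.1 = 0 then 0 else
    ∫ s in (0:ℝ)..t, (t - s) *
      Real.exp (-θ₀ * (s ^ (-δ) - t ^ (-δ)) * jb4 (k : ℝ) (η : ℝ) (p : ℝ) ((k : ℝ) * t)) *
      Real.exp (-θ₀ * ((p₁ : ℝ) ^ (-δ) - (p : ℝ) ^ (-δ)) *
        jb4 (z.1 : ℝ) (z.2 : ℝ) (p₁ : ℝ) ((z.1 : ℝ) * s)) *
      Real.exp (-θ₀ * (((p - p₁ : ℕ) : ℝ) ^ (-δ) - (p : ℝ) ^ (-δ)) *
        jb4 ((k - z.1 : ℤ) : ℝ) ((η - z.2 : ℤ) : ℝ) ((p - p₁ : ℕ) : ℝ)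
          ((k : ℝ) * t - (z.1 : ℝ) * s)) *
      (Real.sqrt (1 + s ^ 2)) ^ (-σ)

lemma echo_exp_decay (c α : ℝ) (hc : 0 < c) (hα : 0 < α) (N : ℕ) :
    ∃ C : ℝ, 0 < C ∧ ∀ x : ℝ, 0 ≤ x → Real.exp (-(c * x ^ α)) ≤ C / (1 + x) ^ N := by
  obtain ⟨M, hM⟩ := exists_nat_ge ((N : ℝ) / α)
  have hM' : (N : ℝ) ≤ α * M := by
    rw [div_le_iff₀ hα] at hM
    linarith
  refine ⟨2 ^ N * (1 + M.factorial / c ^ M), by positivity, fun x hx => ?_⟩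
  rw [le_div_iff₀ (by positivity), Real.exp_neg, inv_mul_le_iff₀ (Real.exp_pos _)]
  have h0 : (0 : ℝ) ≤ M.factorial / c ^ M := by positivity
  have hxa : 0 ≤ x ^ α := Real.rpow_nonneg hx α
  have h1 : 1 ≤ Real.exp (c * x ^ α) := Real.one_le_exp (by positivity)
  rcases le_total x 1 with h | h
  · calc (1 + x) ^ N ≤ 2 ^ N := by gcongr; linarith
      _ = 1 * (2 ^ N * (1 + 0)) := by ring
      _ ≤ _ := by gcongr
  · have h2 := Real.pow_div_factorial_le_exp (c * x ^ α) (by positivity) M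
    have h3 : x ^ N ≤ (x ^ α) ^ M := by
      rw [← Real.rpow_natCast, ← Real.rpow_natCast, ← Real.rpow_mul hx]
      exact Real.rpow_le_rpow_of_exponent_le h hM'
    have hcM : 0 < c ^ M := by positivity
    have h4 : (x ^ α) ^ M ≤ Real.exp (c * x ^ α) * (M.factorial / c ^ M) := by
      rw [mul_pow, div_le_iff₀ (by positivity)] at h2
      rw [mul_div_assoc', le_div_iff₀ hcM]
      linarith
    calc (1 + x) ^ N ≤ (2 * x) ^ N := by gcongr; linarith
      _ = 2 ^ N * x ^ N := by rw [mul_pow]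
      _ ≤ 2 ^ N * (Real.exp (c * x ^ α) * (M.factorial / c ^ M)) := by
          gcongr; exact h3.trans h4
      _ ≤ _ := by nlinarith [show (0:ℝ) < 2 ^ N by positivity,
                    mul_pos (show (0:ℝ) < 2 ^ N by positivity) (Real.exp_pos (c * x ^ α))]

lemma echo_jb4_ge (a b c d : ℝ) : |a| ≤ jb4 a b c d ∧ |b| ≤ jb4 a b c d ∧
    |c| ≤ jb4 a b c d ∧ |d| ≤ jb4 a b c d := by
  unfold jb4
  refine ⟨?_, ?_, ?_, ?_⟩ <;> apply Real.abs_le_sqrt <;>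
    nlinarith [sq_nonneg a, sq_nonneg b, sq_nonneg c, sq_nonneg d]

lemma echo_jb4_nonneg (a b c d : ℝ) : 0 ≤ jb4 a b c d := Real.sqrt_nonneg _

lemma echo_space (δ θ : ℝ) (hδ : 0 < δ) (hδ1 : δ < 1) (hθ : 0 < θ) :
    ∃ C : ℝ, 0 < C ∧ ∀ (a b w : ℝ) (m p : ℕ), 1 ≤ m → 2 * m ≤ p →
      Real.exp (-θ * ((m : ℝ) ^ (-δ) - (p : ℝ) ^ (-δ)) * jb4 a b m w) ≤
        C * (1 / (1 + |a|) ^ 2 * (1 / (1 + |b|) ^ 2) * (1 / (1 + (m : ℝ)) ^ 2)) *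
          (1 / (1 + |w|) ^ 3) := by
  have h2 : (2 : ℝ) ^ (-δ) < 1 := Real.rpow_lt_one_of_one_lt_of_neg (by norm_num) (by linarith)
  obtain ⟨C, hC, hd⟩ := echo_exp_decay (θ * (1 - 2 ^ (-δ))) (1 - δ)
    (mul_pos hθ (by linarith)) (by linarith) 9
  refine ⟨C, hC, fun a b w m p hm hp => ?_⟩
  obtain ⟨ha, hb, hc, hw⟩ := echo_jb4_ge a b m w
  set X := jb4 a b m w
  have hm' : (1 : ℝ) ≤ m := by exact_mod_cast hm
  have hp' : (2 : ℝ) * m ≤ p := by exact_mod_cast hp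
  rw [abs_of_nonneg (by linarith)] at hc
  have hX : 0 < X := by linarith
  have e1 : (p : ℝ) ^ (-δ) ≤ 2 ^ (-δ) * (m : ℝ) ^ (-δ) := by
    rw [← Real.mul_rpow (by norm_num) (by linarith)]
    exact Real.rpow_le_rpow_of_nonpos (by linarith) hp' (by linarith)
  have e2 : X ^ (-δ) ≤ (m : ℝ) ^ (-δ) :=
    Real.rpow_le_rpow_of_nonpos (by linarith) hc (by linarith)
  have e3 : X ^ (1 - δ) = X ^ (-δ) * X := by
    rw [show 1 - δ = -δ + 1 by ring, Real.rpow_add hX, Real.rpow_one]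
  have e4 : (1 - 2 ^ (-δ)) * X ^ (-δ) ≤ (m : ℝ) ^ (-δ) - (p : ℝ) ^ (-δ) := by
    nlinarith
  have e5 : θ * (1 - 2 ^ (-δ)) * X ^ (1 - δ) ≤ θ * ((m : ℝ) ^ (-δ) - (p : ℝ) ^ (-δ)) * X := by
    rw [e3]
    calc θ * (1 - 2 ^ (-δ)) * (X ^ (-δ) * X) = θ * ((1 - 2 ^ (-δ)) * X ^ (-δ)) * X := by ring
      _ ≤ _ := by gcongr
  calc _ ≤ Real.exp (-(θ * (1 - 2 ^ (-δ)) * X ^ (1 - δ))) :=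
        Real.exp_le_exp.mpr (by linarith)
    _ ≤ C / (1 + X) ^ 9 := hd X hX.le
    _ ≤ C / ((1 + |a|) ^ 2 * (1 + |b|) ^ 2 * (1 + (m : ℝ)) ^ 2 * (1 + |w|) ^ 3) := by
        apply div_le_div_of_nonneg_left hC.le (by positivity)
        calc _ ≤ (1 + X) ^ 2 * (1 + X) ^ 2 * (1 + X) ^ 2 * (1 + X) ^ 3 := by gcongr
          _ = _ := by ring
    _ = _ := by field_simp

lemma echo_time_gap (δ s t : ℝ) (hδ : 0 < δ) (hs : 0 < s) (hst : s ≤ t) :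
    δ * (t - s) * t ^ (-δ) ≤ (s ^ (-δ) - t ^ (-δ)) * t := by
  have ht : 0 < t := by linarith
  have h1 : s ^ (-δ) = t ^ (-δ) * (s / t) ^ (-δ) := by
    rw [← Real.mul_rpow ht.le (by positivity)]
    congr 1; field_simp
  have h2 : 1 + δ * (1 - s / t) ≤ (s / t) ^ (-δ) := by
    rw [Real.rpow_def_of_pos (by positivity)]
    have := Real.add_one_le_exp (Real.log (s / t) * -δ)
    have := Real.log_le_sub_one_of_pos (show 0 < s / t by positivity)
    nlinarith
  have h3 : 0 < t ^ (-δ) := Real.rpow_pos_of_pos ht _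
  rw [h1]
  have h4 : δ * (t - s) = δ * (1 - s / t) * t := by field_simp
  rw [h4]
  have : t ^ (-δ) * (1 + δ * (1 - s / t)) ≤ t ^ (-δ) * (s / t) ^ (-δ) := by gcongr
  nlinarith

lemma echo_time (δ σ θ : ℝ) (hδ : 0 < δ) (hδ1 : δ < 1) (hθ : 0 < θ) (hσ : 1 < σ) :
    ∃ C : ℝ, 0 < C ∧ ∀ (k η p w s t : ℝ), 1 ≤ |k| → 0 < s → s ≤ t →
      (|k| * (t - s) < t / 4 → (t - s) / 2 ≤ |w|) →
      (t - s) * Real.exp (-θ * (s ^ (-δ) - t ^ (-δ)) * jb4 k η p (k * t)) *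
        (1 / (1 + |w|) ^ 3) * (Real.sqrt (1 + s ^ 2)) ^ (-σ) ≤
      C * (Real.sqrt (1 + t ^ 2)) ^ (-σ) * (1 + (t - s) ^ 2)⁻¹ := by
  obtain ⟨n, hn⟩ := exists_nat_ge σ
  obtain ⟨C, hC, hd⟩ := echo_exp_decay (θ * δ / 4) (1 - δ) (by positivity) (by linarith) (n + 3)
  refine ⟨C + 8 * 2 ^ σ, by positivity, fun k η p w s t hk hs hst hw => ?_⟩
  have ht : 0 < t := by linarith
  have hS1 : 1 ≤ Real.sqrt (1 + s ^ 2) := by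
    rw [Real.one_le_sqrt]; nlinarith
  have hT1 : 1 ≤ Real.sqrt (1 + t ^ 2) := by
    rw [Real.one_le_sqrt]; nlinarith
  have htd : 0 < t ^ (-δ) := Real.rpow_pos_of_pos ht _
  have hgap := echo_time_gap δ s t hδ hs hst
  obtain ⟨-, -, -, hK⟩ := echo_jb4_ge k η p (k * t)
  rw [abs_mul, abs_of_pos ht] at hK
  set K := jb4 k η p (k * t)
  set S := Real.sqrt (1 + s ^ 2)
  set T := Real.sqrt (1 + t ^ 2) with hT
  have hts : 0 ≤ t - s := by linarith
  have hdiff : 0 ≤ s ^ (-δ) - t ^ (-δ) := by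
    have : 0 ≤ (s ^ (-δ) - t ^ (-δ)) * t := le_trans (by positivity) hgap
    exact nonneg_of_mul_nonneg_left this ht
  have hTs : 0 < T ^ (-σ) := Real.rpow_pos_of_pos (by linarith) _
  have hSs : 0 < S ^ (-σ) := Real.rpow_pos_of_pos (by linarith) _
  have hSs1 : S ^ (-σ) ≤ 1 := Real.rpow_le_one_of_one_le_of_nonpos hS1 (by linarith)
  have hw0 : 0 ≤ |w| := abs_nonneg w
  have hw3 : 1 / (1 + |w|) ^ 3 ≤ 1 := by
    rw [div_le_one (by positivity)]
    exact one_le_pow₀ (by linarith)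
  have hden : 0 < 1 + (t - s) ^ 2 := by positivity
  have hCn : 0 ≤ C * T ^ (-σ) * (1 + (t - s) ^ 2)⁻¹ := by positivity
  have h8n : 0 ≤ 8 * 2 ^ σ * T ^ (-σ) * (1 + (t - s) ^ 2)⁻¹ := by positivity
  by_cases h : |k| * (t - s) < t / 4
  · have hwb := hw h
    have hs2 : t ≤ 2 * s := by nlinarith
    have hE : Real.exp (-θ * (s ^ (-δ) - t ^ (-δ)) * K) ≤ 1 := by
      apply Real.exp_le_one_iff.mpr
      have : 0 ≤ θ * (s ^ (-δ) - t ^ (-δ)) * K :=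
        mul_nonneg (mul_nonneg hθ.le hdiff) (echo_jb4_nonneg _ _ _ _)
      linarith
    have hTS : T ≤ 2 * S := by
      rw [hT, Real.sqrt_le_left (by linarith)]
      rw [mul_pow, Real.sq_sqrt (by positivity)]
      nlinarith
    have hST : S ^ (-σ) ≤ 2 ^ σ * T ^ (-σ) := by
      have h1 : (2 * S) ^ (-σ) ≤ T ^ (-σ) :=
        Real.rpow_le_rpow_of_nonpos (by linarith) hTS (by linarith)
      rw [Real.mul_rpow (by norm_num) (by linarith)] at h1
      calc S ^ (-σ) = 2 ^ σ * (2 ^ (-σ) * S ^ (-σ)) := by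
            rw [← mul_assoc, ← Real.rpow_add (by norm_num)]; simp
        _ ≤ _ := by gcongr
    have hx : (t - s) * (1 / (1 + |w|) ^ 3) ≤ 8 * (1 + (t - s) ^ 2)⁻¹ := by
      have : (1 + (t - s)) ^ 3 ≤ 8 * (1 + |w|) ^ 3 := by
        calc (1 + (t - s)) ^ 3 ≤ (2 * (1 + |w|)) ^ 3 := by gcongr; linarith
          _ = _ := by ring
      rw [← div_eq_mul_inv, mul_one_div, div_le_div_iff₀ (by positivity) hden]
      nlinarith [mul_nonneg hts hts]
    calc _ = ((t - s) * (1 / (1 + |w|) ^ 3)) * Real.exp (-θ * (s ^ (-δ) - t ^ (-δ)) * K) *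
          S ^ (-σ) := by ring
      _ ≤ (8 * (1 + (t - s) ^ 2)⁻¹) * 1 * (2 ^ σ * T ^ (-σ)) := by gcongr
      _ ≤ _ := by linarith
  · push Not at h
    have hexp : θ * δ / 4 * t ^ (1 - δ) ≤ θ * (s ^ (-δ) - t ^ (-δ)) * K := by
      have e3 : t ^ (1 - δ) = t ^ (-δ) * t := by
        rw [show 1 - δ = -δ + 1 by ring, Real.rpow_add ht, Real.rpow_one]
      rw [e3]
      calc θ * δ / 4 * (t ^ (-δ) * t) = θ * δ * t ^ (-δ) * (t / 4) := by ring
        _ ≤ θ * δ * t ^ (-δ) * (|k| * (t - s)) := by gcongr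
        _ = θ * |k| * (δ * (t - s) * t ^ (-δ)) := by ring
        _ ≤ θ * |k| * ((s ^ (-δ) - t ^ (-δ)) * t) := by gcongr
        _ = θ * (s ^ (-δ) - t ^ (-δ)) * (|k| * t) := by ring
        _ ≤ _ := by gcongr
    have hE : Real.exp (-θ * (s ^ (-δ) - t ^ (-δ)) * K) ≤ C / (1 + t) ^ (n + 3) :=
      (Real.exp_le_exp.mpr (by linarith)).trans (hd t ht.le)
    have hTn : 1 / (1 + t) ^ n ≤ T ^ (-σ) := by
      rw [Real.rpow_neg (by linarith), one_div]
      apply inv_anti₀ (Real.rpow_pos_of_pos (by linarith) _)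
      have hTt : T ≤ 1 + t := by
        rw [hT, Real.sqrt_le_left (by linarith)]; nlinarith
      calc T ^ σ ≤ T ^ (n : ℝ) := Real.rpow_le_rpow_of_exponent_le hT1 hn
        _ = T ^ n := Real.rpow_natCast _ _
        _ ≤ _ := by gcongr
    have hx : (t - s) * (1 / (1 + t) ^ 3) ≤ (1 + (t - s) ^ 2)⁻¹ := by
      rw [← one_div, mul_one_div, div_le_div_iff₀ (by positivity) hden]
      have : (t - s) ^ 2 ≤ t ^ 2 := by gcongr; linarith
      calc (t - s) * (1 + (t - s) ^ 2) ≤ t * (1 + t ^ 2) := by gcongr; linarith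
        _ ≤ _ := by nlinarith [mul_pos ht ht]
    calc _ ≤ (t - s) * (C / (1 + t) ^ (n + 3)) * 1 * 1 := by gcongr
      _ = C * (1 / (1 + t) ^ n) * ((t - s) * (1 / (1 + t) ^ 3)) := by
          rw [pow_add]; field_simp
      _ ≤ C * T ^ (-σ) * (1 + (t - s) ^ 2)⁻¹ := by gcongr
      _ ≤ _ := by linarith

/-- Summable weight. -/
noncomputable def echoH (a b : ℤ) (m : ℕ) : ℝ :=
  1 / (1 + |(a : ℝ)|) ^ 2 * (1 / (1 + |(b : ℝ)|) ^ 2) * (1 / (1 + (m : ℝ)) ^ 2)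

lemma echoH_nonneg (a b : ℤ) (m : ℕ) : 0 ≤ echoH a b m := by
  unfold echoH; positivity

lemma echo_exp_le_one (δ θ X : ℝ) (m p : ℕ) (hδ : 0 < δ) (hθ : 0 < θ) (hX : 0 ≤ X)
    (hm : 1 ≤ m) (hp : m ≤ p) :
    Real.exp (-θ * ((m : ℝ) ^ (-δ) - (p : ℝ) ^ (-δ)) * X) ≤ 1 := by
  apply Real.exp_le_one_iff.mpr
  have : (p : ℝ) ^ (-δ) ≤ (m : ℝ) ^ (-δ) :=
    Real.rpow_le_rpow_of_nonpos (by exact_mod_cast hm) (by exact_mod_cast hp) (by linarith)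
  have : 0 ≤ θ * ((m : ℝ) ^ (-δ) - (p : ℝ) ^ (-δ)) * X :=
    mul_nonneg (mul_nonneg hθ.le (by linarith)) hX
  linarith

lemma echo_integral (t A : ℝ) (hA : 0 ≤ A) :
    (∫ s in (0:ℝ)..t, A * (1 + (t - s) ^ 2)⁻¹) ≤ A * 2 := by
  rw [intervalIntegral.integral_const_mul]
  gcongr
  rw [intervalIntegral.integral_comp_sub_left (fun x => (1 + x ^ 2)⁻¹)]
  simp only [sub_self, sub_zero, integral_inv_one_add_sq, Real.arctan_zero]
  have := Real.arctan_lt_pi_div_two t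
  have := Real.pi_le_four
  linarith

lemma echo_term_bound (δ σ θ : ℝ) (hδ : 0 < δ) (hδ1 : δ < 1) (hθ : 0 < θ) (hσ : 1 < σ) :
    ∃ C : ℝ, 0 < C ∧ ∀ (k η : ℤ) (p : ℕ) (t : ℝ) (z : ℤ × ℤ) (p₁ : ℕ), k ≠ 0 → 0 < t →
      1 ≤ p₁ → p₁ < p →
      0 ≤ echoTerm δ σ θ k η p t z p₁ ∧ echoTerm δ σ θ k η p t z p₁ ≤
        C * (Real.sqrt (1 + t ^ 2)) ^ (-σ) *
          (echoH z.1 z.2 p₁ + echoH (k - z.1) (η - z.2) (p - p₁)) := by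
  obtain ⟨C₁, hC₁, h₁⟩ := echo_space δ θ hδ hδ1 hθ
  obtain ⟨C₂, hC₂, h₂⟩ := echo_time δ σ θ hδ hδ1 hθ hσ
  refine ⟨C₁ * C₂ * 2, by positivity, fun k η p t z p₁ hk ht hp1 hp => ?_⟩
  have hH1 := echoH_nonneg z.1 z.2 p₁
  have hH2 := echoH_nonneg (k - z.1) (η - z.2) (p - p₁)
  have hTs : 0 < (Real.sqrt (1 + t ^ 2)) ^ (-σ) := Real.rpow_pos_of_pos (by positivity) _
  unfold echoTerm
  split_ifs with hz
  · exact ⟨le_rfl, by positivity⟩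
  have hk1 : 1 ≤ |(k : ℝ)| := by exact_mod_cast Int.one_le_abs hk
  have hz1 : 1 ≤ |(z.1 : ℝ)| := by exact_mod_cast Int.one_le_abs hz
  have hnn : ∀ s ∈ Set.Ioc (0:ℝ) t, 0 ≤ (t - s) *
      Real.exp (-θ * (s ^ (-δ) - t ^ (-δ)) * jb4 (k : ℝ) (η : ℝ) (p : ℝ) ((k : ℝ) * t)) *
      Real.exp (-θ * ((p₁ : ℝ) ^ (-δ) - (p : ℝ) ^ (-δ)) *
        jb4 (z.1 : ℝ) (z.2 : ℝ) (p₁ : ℝ) ((z.1 : ℝ) * s)) *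
      Real.exp (-θ * (((p - p₁ : ℕ) : ℝ) ^ (-δ) - (p : ℝ) ^ (-δ)) *
        jb4 ((k - z.1 : ℤ) : ℝ) ((η - z.2 : ℤ) : ℝ) ((p - p₁ : ℕ) : ℝ)
          ((k : ℝ) * t - (z.1 : ℝ) * s)) *
      (Real.sqrt (1 + s ^ 2)) ^ (-σ) := by
    intro s hs
    have : 0 ≤ t - s := by linarith [hs.2]
    positivity
  refine ⟨?_, ?_⟩
  · rw [intervalIntegral.integral_of_le ht.le]
    exact setIntegral_nonneg measurableSet_Ioc hnn
  set A : ℝ := C₁ * C₂ * (Real.sqrt (1 + t ^ 2)) ^ (-σ) *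
    (echoH z.1 z.2 p₁ + echoH (k - z.1) (η - z.2) (p - p₁)) with hA
  have hA0 : 0 ≤ A := by positivity
  refine le_trans ?_ ((echo_integral t A hA0).trans (le_of_eq (by rw [hA]; ring)))
  have hint : IntervalIntegrable (fun s : ℝ => A * (1 + (t - s) ^ 2)⁻¹) volume 0 t := by
    apply Continuous.intervalIntegrable
    apply continuous_const.mul
    apply Continuous.inv₀ (by fun_prop)
    intro s; positivity
  rw [intervalIntegral.integral_of_le ht.le, intervalIntegral.integral_of_le ht.le]
  refine integral_mono_of_nonneg ((ae_restrict_iff' measurableSet_Ioc).mpr (ae_of_all _ hnn))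
    hint.1 ((ae_restrict_iff' measurableSet_Ioc).mpr (ae_of_all _ fun s hs => ?_))
  have hts : 0 ≤ t - s := by linarith [hs.2]
  have hsp := hs.1
  dsimp only
  have hden : 0 < (1 + (t - s) ^ 2)⁻¹ := by positivity
  rcases le_or_gt (2 * p₁) p with hc | hc
  · have e3 := echo_exp_le_one δ θ (jb4 ((k - z.1 : ℤ) : ℝ) ((η - z.2 : ℤ) : ℝ)
      ((p - p₁ : ℕ) : ℝ) ((k : ℝ) * t - (z.1 : ℝ) * s)) (p - p₁) p hδ hθ
      (echo_jb4_nonneg _ _ _ _) (by omega) (by omega)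
    have e2 := h₁ z.1 z.2 ((z.1 : ℝ) * s) p₁ p hp1 hc
    have e1 := h₂ k η p ((z.1 : ℝ) * s) s t hk1 hsp hs.2 (by
      intro h
      rw [abs_mul, abs_of_pos hsp]
      nlinarith)
    rw [← echoH] at e2
    set E1 := Real.exp (-θ * (s ^ (-δ) - t ^ (-δ)) * jb4 (k : ℝ) (η : ℝ) (p : ℝ) ((k : ℝ) * t))
    calc _ ≤ (t - s) * E1 * (C₁ * echoH z.1 z.2 p₁ * (1 / (1 + |(z.1 : ℝ) * s|) ^ 3)) * 1 *
          (Real.sqrt (1 + s ^ 2)) ^ (-σ) := by gcongr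
      _ = C₁ * echoH z.1 z.2 p₁ * ((t - s) * E1 * (1 / (1 + |(z.1 : ℝ) * s|) ^ 3) *
          (Real.sqrt (1 + s ^ 2)) ^ (-σ)) := by ring
      _ ≤ C₁ * echoH z.1 z.2 p₁ *
          (C₂ * (Real.sqrt (1 + t ^ 2)) ^ (-σ) * (1 + (t - s) ^ 2)⁻¹) := by gcongr
      _ = C₁ * C₂ * (Real.sqrt (1 + t ^ 2)) ^ (-σ) * echoH z.1 z.2 p₁ *
          (1 + (t - s) ^ 2)⁻¹ := by ring
      _ ≤ _ := by rw [hA]; gcongr; linarith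
  · have e2 := echo_exp_le_one δ θ (jb4 (z.1 : ℝ) (z.2 : ℝ) (p₁ : ℝ) ((z.1 : ℝ) * s))
      p₁ p hδ hθ (echo_jb4_nonneg _ _ _ _) (by omega) (by omega)
    have e3 := h₁ ((k - z.1 : ℤ) : ℝ) ((η - z.2 : ℤ) : ℝ) ((k : ℝ) * t - (z.1 : ℝ) * s)
      (p - p₁) p (by omega) (by omega)
    have e1 := h₂ k η p ((k : ℝ) * t - (z.1 : ℝ) * s) s t hk1 hsp hs.2 (by
      intro h
      have hw : (k : ℝ) * t - (z.1 : ℝ) * s = (k : ℝ) * (t - s) - -(((k - z.1 : ℤ) : ℝ) * s) := by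
        push_cast; ring
      have ha : |(k : ℝ) * (t - s)| = |(k : ℝ)| * (t - s) := by
        rw [abs_mul, abs_of_nonneg hts]
      by_cases h0 : k - z.1 = 0
      · rw [hw, h0]
        simp only [Int.cast_zero, zero_mul, neg_zero, sub_zero, ha]
        nlinarith
      · have hz2 : 1 ≤ |((k - z.1 : ℤ) : ℝ)| := by exact_mod_cast Int.one_le_abs h0
        have h3 := abs_sub_abs_le_abs_sub (-(((k - z.1 : ℤ) : ℝ) * s)) ((k : ℝ) * (t - s))
        rw [abs_sub_comm, ← hw, ha, abs_neg, abs_mul, abs_of_pos hsp] at h3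
        nlinarith)
    rw [← echoH] at e3
    set E1 := Real.exp (-θ * (s ^ (-δ) - t ^ (-δ)) * jb4 (k : ℝ) (η : ℝ) (p : ℝ) ((k : ℝ) * t))
    set w := (k : ℝ) * t - (z.1 : ℝ) * s
    set H := echoH (k - z.1) (η - z.2) (p - p₁)
    calc _ ≤ (t - s) * E1 * 1 * (C₁ * H * (1 / (1 + |w|) ^ 3)) *
          (Real.sqrt (1 + s ^ 2)) ^ (-σ) := by gcongr
      _ = C₁ * H * ((t - s) * E1 * (1 / (1 + |w|) ^ 3) *
          (Real.sqrt (1 + s ^ 2)) ^ (-σ)) := by ring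
      _ ≤ C₁ * H *
          (C₂ * (Real.sqrt (1 + t ^ 2)) ^ (-σ) * (1 + (t - s) ^ 2)⁻¹) := by gcongr
      _ = C₁ * C₂ * (Real.sqrt (1 + t ^ 2)) ^ (-σ) * H *
          (1 + (t - s) ^ 2)⁻¹ := by ring
      _ ≤ _ := by rw [hA]; gcongr; linarith

lemma echo_summable_nat : Summable (fun m : ℕ => 1 / (1 + (m : ℝ)) ^ 2) := by
  have := (summable_nat_add_iff 1).mpr (Real.summable_one_div_nat_pow.mpr (le_refl 2))
  refine this.congr fun m => ?_
  push_cast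
  rw [add_comm]

lemma echo_summable_int : Summable (fun a : ℤ => 1 / (1 + |(a : ℝ)|) ^ 2) := by
  apply Summable.of_nat_of_neg
  · simpa using echo_summable_nat
  · simpa using echo_summable_nat

/-- The two-dimensional weight. -/
noncomputable def echoG (z : ℤ × ℤ) : ℝ :=
  1 / (1 + |(z.1 : ℝ)|) ^ 2 * (1 / (1 + |(z.2 : ℝ)|) ^ 2)

lemma echoG_nonneg (z : ℤ × ℤ) : 0 ≤ echoG z := by unfold echoG; positivity

lemma echoG_summable : Summable echoG :=
  echo_summable_int.mul_of_nonneg echo_summable_int (fun _ => by positivity)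
    (fun _ => by positivity)

/-- The central echo-summation estimate: for `δ ∈ (0,1)` small enough,
`σ > 1`, `θ₀, θ′ > 0`, the sum over all sextets `(k₁,η₁,p₁,k₂,η₂,p₂)` with `k₁+k₂=k`,
`η₁+η₂=η`, `p₁+p₂=p`, `k₁ ≠ 0`, `p₁,p₂ ≥ 1` of the echo time integrals is bounded by
`C⟨t⟩^{−σ}`, uniformly in `k ≠ 0`, `η`, `p ≥ 2`, and `t > 0`. -/
theorem echo_summation_estimate (σ θ₀ θ' : ℝ) (hσ : 1 < σ) (hθ₀ : 0 < θ₀) (hθ' : 0 < θ') :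
    ∃ δ₀ : ℝ, 0 < δ₀ ∧ δ₀ < 1 ∧ ∀ δ : ℝ, 0 < δ → δ ≤ δ₀ →
      ∃ C : ℝ, 0 < C ∧ ∀ (k η : ℤ) (p : ℕ), k ≠ 0 → 2 ≤ p → ∀ t : ℝ, 0 < t →
        Summable (fun z : ℤ × ℤ => ∑ p₁ ∈ Finset.Ico 1 p, echoTerm δ σ θ₀ k η p t z p₁) ∧
        (∑' z : ℤ × ℤ, ∑ p₁ ∈ Finset.Ico 1 p, echoTerm δ σ θ₀ k η p t z p₁) ≤
          C * (Real.sqrt (1 + t ^ 2)) ^ (-σ) := by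
  refine ⟨1 / 2, by norm_num, by norm_num, fun δ hδ hδ2 => ?_⟩
  obtain ⟨C, hC, hb⟩ := echo_term_bound δ σ θ₀ hδ (by linarith) hθ₀ hσ
  set Q : ℝ := ∑' m : ℕ, 1 / (1 + (m : ℝ)) ^ 2 with hQ
  set R : ℝ := ∑' z, echoG z with hR
  have hQ0 : 0 ≤ Q := tsum_nonneg fun m => by positivity
  have hR0 : 0 ≤ R := tsum_nonneg echoG_nonneg
  refine ⟨C * Q * (R + R) + 1, by positivity, fun k η p hk hp t ht => ?_⟩
  set T := (Real.sqrt (1 + t ^ 2)) ^ (-σ) with hT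
  have hTs : 0 < T := Real.rpow_pos_of_pos (by positivity) _
  have hq1 : ∑ p₁ ∈ Finset.Ico 1 p, 1 / (1 + (p₁ : ℝ)) ^ 2 ≤ Q :=
    echo_summable_nat.sum_le_tsum _ fun m _ => by positivity
  have hq2 : ∑ p₁ ∈ Finset.Ico 1 p, 1 / (1 + ((p - p₁ : ℕ) : ℝ)) ^ 2 ≤ Q := by
    rw [← Finset.sum_image (f := fun m : ℕ => 1 / (1 + (m : ℝ)) ^ 2) (g := fun p₁ => p - p₁)]
    · exact echo_summable_nat.sum_le_tsum _ fun m _ => by positivity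
    · intro a ha b hb' hab
      simp only [Finset.coe_Ico, Set.mem_Ico] at ha hb' hab
      omega
  have hle : ∀ z : ℤ × ℤ, ∑ p₁ ∈ Finset.Ico 1 p, echoTerm δ σ θ₀ k η p t z p₁ ≤
      C * T * Q * (echoG z + echoG ((k, η) - z)) := by
    intro z
    have g1 := echoG_nonneg z
    have g2 := echoG_nonneg ((k, η) - z)
    calc _ ≤ ∑ p₁ ∈ Finset.Ico 1 p, C * T *
          (echoG z * (1 / (1 + (p₁ : ℝ)) ^ 2) +
            echoG ((k, η) - z) * (1 / (1 + ((p - p₁ : ℕ) : ℝ)) ^ 2)) := by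
          apply Finset.sum_le_sum
          intro p₁ hp₁
          rw [Finset.mem_Ico] at hp₁
          exact (hb k η p t z p₁ hk ht hp₁.1 hp₁.2).2
      _ = C * T * (echoG z * ∑ p₁ ∈ Finset.Ico 1 p, 1 / (1 + (p₁ : ℝ)) ^ 2 +
            echoG ((k, η) - z) * ∑ p₁ ∈ Finset.Ico 1 p, 1 / (1 + ((p - p₁ : ℕ) : ℝ)) ^ 2) := by
          rw [← Finset.mul_sum, Finset.sum_add_distrib, Finset.mul_sum, Finset.mul_sum]
      _ ≤ C * T * (echoG z * Q + echoG ((k, η) - z) * Q) := by gcongr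
      _ = _ := by ring
  have hnn : ∀ z : ℤ × ℤ, 0 ≤ ∑ p₁ ∈ Finset.Ico 1 p, echoTerm δ σ θ₀ k η p t z p₁ := by
    intro z
    apply Finset.sum_nonneg
    intro p₁ hp₁
    rw [Finset.mem_Ico] at hp₁
    exact (hb k η p t z p₁ hk ht hp₁.1 hp₁.2).1
  have hs2 : Summable fun z : ℤ × ℤ => echoG ((k, η) - z) :=
    (Equiv.subLeft ((k, η) : ℤ × ℤ)).summable_iff.mpr echoG_summable
  have ht2 : ∑' z : ℤ × ℤ, echoG ((k, η) - z) = R :=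
    (Equiv.subLeft ((k, η) : ℤ × ℤ)).tsum_eq echoG
  have hsb : Summable fun z : ℤ × ℤ => C * T * Q * (echoG z + echoG ((k, η) - z)) :=
    (echoG_summable.add hs2).mul_left _
  have hS := Summable.of_nonneg_of_le hnn hle hsb
  refine ⟨hS, (hS.tsum_le_tsum hle hsb).trans ?_⟩
  rw [tsum_mul_left, echoG_summable.tsum_add hs2, ht2, ← hR]
  nlinarith
end

section
/- Let δ ∈ (0,1), σ > 1, and θ, θ′ > 0. Then there exists a constant C > 0 such that for every t > 0: ∫₀ᵗ (t−s) e^{−θ(s^{−δ} − t^{−δ})⟨t⟩} e^{−θ′⟨s⟩^{1−δ}} ⟨s⟩^{−σ} ds ≤ C ⟨t⟩^{−σ}, where ⟨t⟩ = √(1+t²). -/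
open MeasureTheory

/-- For `δ ∈ (0,1)`, `σ > 1`, `θ, θ′ > 0`, there is `C > 0` such that
for every `t > 0`,
`∫₀ᵗ (t−s) e^{−θ(s^{−δ} − t^{−δ})⟨t⟩} e^{−θ′⟨s⟩^{1−δ}} ⟨s⟩^{−σ} ds ≤ C ⟨t⟩^{−σ}`,
where `⟨t⟩ = √(1+t²)`. -/
theorem time_integral_stretched_exponential_bound
    (δ σ θ θ' : ℝ) (hδ0 : 0 < δ) (hδ1 : δ < 1) (hσ : 1 < σ) (hθ : 0 < θ) (hθ' : 0 < θ') :
    ∃ C : ℝ, 0 < C ∧ ∀ t : ℝ, 0 < t →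
      (∫ s in (0:ℝ)..t, (t - s) *
          Real.exp (-θ * (s ^ (-δ) - t ^ (-δ)) * Real.sqrt (1 + t ^ 2)) *
          Real.exp (-θ' * (Real.sqrt (1 + s ^ 2)) ^ (1 - δ)) *
          (Real.sqrt (1 + s ^ 2)) ^ (-σ)) ≤
        C * (Real.sqrt (1 + t ^ 2)) ^ (-σ) := by
  have h2 : (1:ℝ) < 2 ^ δ := Real.one_lt_rpow (by norm_num) hδ0
  have hc : 0 < (1/2:ℝ) ^ (1 - δ) := by positivity
  obtain ⟨κ, hκ, hκ1, hκ2⟩ : ∃ κ : ℝ, 0 < κ ∧ κ ≤ θ * (2 ^ δ - 1) ∧ κ ≤ θ' * (1/2:ℝ) ^ (1 - δ) :=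
    ⟨min (θ * (2 ^ δ - 1)) (θ' * (1/2:ℝ) ^ (1 - δ)),
      lt_min (mul_pos hθ (by linarith)) (mul_pos hθ' hc), min_le_left _ _, min_le_right _ _⟩
  obtain ⟨n, hn⟩ := exists_nat_ge ((2 + σ) / (1 - δ))
  have hd : 0 < 1 - δ := by linarith
  rw [div_le_iff₀ hd] at hn
  refine ⟨n.factorial / κ ^ n, by positivity, fun t ht => ?_⟩
  obtain ⟨x, hx⟩ : ∃ x, x = Real.sqrt (1 + t ^ 2) := ⟨_, rfl⟩
  rw [← hx]
  have hx1 : 1 ≤ x := by rw [hx]; exact Real.one_le_sqrt.2 (by nlinarith)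
  have hx0 : 0 < x := by linarith
  have hxt : t ≤ x := by rw [hx]; exact Real.le_sqrt_of_sq_le (by linarith)
  have key : ∀ s ∈ Set.uIoc 0 t, ‖(t - s) *
          Real.exp (-θ * (s ^ (-δ) - t ^ (-δ)) * x) *
          Real.exp (-θ' * (Real.sqrt (1 + s ^ 2)) ^ (1 - δ)) *
          (Real.sqrt (1 + s ^ 2)) ^ (-σ)‖ ≤ x * Real.exp (-(κ * x ^ (1 - δ))) := by
    intro s hs
    rw [Set.uIoc_of_le ht.le] at hs
    obtain ⟨hs0, hst⟩ := hs
    have hts : 0 ≤ t - s := by linarith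
    obtain ⟨y, hy⟩ : ∃ y, y = Real.sqrt (1 + s ^ 2) := ⟨_, rfl⟩
    rw [← hy]
    have hy1 : 1 ≤ y := by rw [hy]; exact Real.one_le_sqrt.2 (by nlinarith)
    have hy0 : 0 < y := by linarith
    have hyσ : y ^ (-σ) ≤ 1 := Real.rpow_le_one_of_one_le_of_nonpos hy1 (by linarith)
    have hmono : t ^ (-δ) ≤ s ^ (-δ) := Real.rpow_le_rpow_of_nonpos hs0 hst (by linarith)
    have hexp : -θ * (s ^ (-δ) - t ^ (-δ)) * x + -θ' * y ^ (1 - δ) ≤ -(κ * x ^ (1 - δ)) := by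
      have hA : 0 ≤ θ * (s ^ (-δ) - t ^ (-δ)) * x := by
        have : 0 ≤ s ^ (-δ) - t ^ (-δ) := by linarith
        positivity
      have hB : 0 ≤ θ' * y ^ (1 - δ) := by positivity
      have hX : 0 < x ^ (1 - δ) := by positivity
      rcases le_total s (t / 2) with h | h
      · have h3 : (t / 2) ^ (-δ) ≤ s ^ (-δ) := Real.rpow_le_rpow_of_nonpos hs0 h (by linarith)
        have h4 : (t / 2) ^ (-δ) = 2 ^ δ * t ^ (-δ) := by
          rw [Real.div_rpow ht.le (by norm_num), Real.rpow_neg (by norm_num : (0:ℝ) ≤ 2)]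
          field_simp
        have h5 : x ^ (-δ) ≤ t ^ (-δ) := Real.rpow_le_rpow_of_nonpos ht hxt (by linarith)
        have h6 : x ^ (1 - δ) = x ^ (-δ) * x := by
          rw [sub_eq_neg_add, Real.rpow_add hx0, Real.rpow_one]
        have h7 : (2 ^ δ - 1) * x ^ (-δ) ≤ s ^ (-δ) - t ^ (-δ) := by
          have := mul_le_mul_of_nonneg_left h5 (by linarith : (0:ℝ) ≤ 2 ^ δ - 1)
          linarith
        have h8 : θ * ((2 ^ δ - 1) * x ^ (-δ)) * x ≤ θ * (s ^ (-δ) - t ^ (-δ)) * x := by gcongr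
        have h9 := mul_le_mul_of_nonneg_right hκ1 hX.le
        rw [h6] at h9 ⊢
        linarith
      · have h3 : 1 / 2 * x ≤ y := by
          rw [hy]
          apply Real.le_sqrt_of_sq_le
          have : x ^ 2 = 1 + t ^ 2 := by rw [hx]; exact Real.sq_sqrt (by positivity)
          nlinarith
        have h4 : (1 / 2 * x) ^ (1 - δ) ≤ y ^ (1 - δ) :=
          Real.rpow_le_rpow (by positivity) h3 hd.le
        rw [Real.mul_rpow (by norm_num) hx0.le] at h4
        have h5 := mul_le_mul_of_nonneg_left h4 hθ'.le
        have h9 := mul_le_mul_of_nonneg_right hκ2 hX.le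
        linarith
    rw [Real.norm_of_nonneg (by positivity)]
    rw [mul_assoc (t - s), ← Real.exp_add]
    have := Real.exp_le_exp.2 hexp
    calc _ ≤ x * Real.exp (-(κ * x ^ (1 - δ))) * 1 := by
          gcongr
          linarith
      _ = _ := mul_one _
  have hI := intervalIntegral.norm_integral_le_of_norm_le_const key
  refine (le_abs_self _).trans (hI.trans ?_)
  rw [sub_zero, abs_of_pos ht]
  have hf := Real.pow_div_factorial_le_exp (κ * x ^ (1 - δ)) (by positivity) n
  have hp : x ^ (2 + σ) ≤ (x ^ (1 - δ)) ^ n := by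
    rw [← Real.rpow_natCast, ← Real.rpow_mul hx0.le]
    exact Real.rpow_le_rpow_of_exponent_le hx1 (by linarith)
  have hq : x ^ (2 + σ) * Real.exp (-(κ * x ^ (1 - δ))) ≤ n.factorial / κ ^ n := by
    rw [Real.exp_neg, ← div_eq_mul_inv, div_le_iff₀ (Real.exp_pos _)]
    calc _ ≤ (x ^ (1 - δ)) ^ n := hp
      _ = n.factorial / κ ^ n * ((κ * x ^ (1 - δ)) ^ n / n.factorial) := by
        rw [mul_pow]; field_simp
      _ ≤ _ := by gcongr
  calc x * Real.exp (-(κ * x ^ (1 - δ))) * t ≤ x * Real.exp (-(κ * x ^ (1 - δ))) * x := by gcongr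
    _ = (x ^ (2 + σ) * Real.exp (-(κ * x ^ (1 - δ)))) * x ^ (-σ) := by
      have : x ^ (2 + σ) * x ^ (-σ) = x * x := by
        rw [← Real.rpow_add hx0, show 2 + σ + -σ = ((2:ℕ):ℝ) by push_cast; ring,
          Real.rpow_natCast, sq]
      linear_combination (-Real.exp (-(κ * x ^ (1 - δ)))) * this
    _ ≤ _ := by gcongr
end

section
/- Let δ ∈ (0,1), σ > 1, and θ > 0. Then there exists a constant C > 0 such that for every t > 0: ∫₀ᵗ (t−s) e^{−θ⟨t−s⟩^{1−δ}} ⟨s⟩^{−σ} ds ≤ C ⟨t⟩^{−σ}, where ⟨x⟩ = √(1+x²). -/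
open MeasureTheory

lemma aux_exp_bound (p a θ : ℝ) (hp : 0 < p) (hθ : 0 < θ) :
    ∃ K : ℝ, 0 < K ∧ ∀ y : ℝ, 1 ≤ y → Real.exp (-θ * y ^ p) ≤ K * y ^ (-a) := by
  obtain ⟨n, hn⟩ := exists_nat_ge (a / p)
  refine ⟨n.factorial / θ ^ n, by positivity, fun y hy => ?_⟩
  have hy0 : 0 < y := by linarith
  have hyp : 0 < y ^ p := Real.rpow_pos_of_pos hy0 p
  have h1 := Real.pow_div_factorial_le_exp (θ * y ^ p) (by positivity) n
  have h2 : y ^ a ≤ (y ^ p) ^ n := by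
    rw [← Real.rpow_natCast, ← Real.rpow_mul hy0.le]
    apply Real.rpow_le_rpow_of_exponent_le hy
    rw [div_le_iff₀ hp] at hn
    linarith
  have hya : 0 < y ^ a := Real.rpow_pos_of_pos hy0 a
  have hf : (0:ℝ) < n.factorial := by positivity
  have ht : 0 < θ ^ n := by positivity
  rw [Real.rpow_neg hy0.le, neg_mul, Real.exp_neg,
    show (n.factorial : ℝ) / θ ^ n * (y ^ a)⁻¹ = (θ ^ n * y ^ a / n.factorial)⁻¹ by
      field_simp]
  apply inv_anti₀ (by positivity)
  refine le_trans ?_ h1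
  rw [mul_pow]
  gcongr

lemma aux_peetre (t s : ℝ) :
    Real.sqrt (1 + t ^ 2) ≤ 2 * (Real.sqrt (1 + (t - s) ^ 2) * Real.sqrt (1 + s ^ 2)) := by
  rw [← Real.sqrt_mul (by positivity)]
  apply Real.sqrt_le_iff.2
  refine ⟨by positivity, ?_⟩
  rw [mul_pow, Real.sq_sqrt (by positivity)]
  nlinarith [sq_nonneg (t - 2 * s), sq_nonneg ((t - s) * s), sq_nonneg t, sq_nonneg s]

lemma aux_pointwise (p σ θ K t s : ℝ) (hσ : 1 < σ) (hK : 0 < K) (hst : s ≤ t)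
    (h : ∀ y : ℝ, 1 ≤ y → Real.exp (-θ * y ^ p) ≤ K * y ^ (-(σ + 3))) :
    (t - s) * Real.exp (-θ * (Real.sqrt (1 + (t - s) ^ 2)) ^ p) *
          (Real.sqrt (1 + s ^ 2)) ^ (-σ) ≤
      (K * 2 ^ σ * (Real.sqrt (1 + t ^ 2)) ^ (-σ)) * (1 / (1 + (t - s) ^ 2)) := by
  set y := Real.sqrt (1 + (t - s) ^ 2) with hy
  set z := Real.sqrt (1 + s ^ 2) with hz
  set w := Real.sqrt (1 + t ^ 2) with hw
  have hy1 : 1 ≤ y := Real.one_le_sqrt.2 (by nlinarith [sq_nonneg (t - s)])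
  have hy0 : 0 < y := by linarith
  have hz0 : 0 < z := Real.sqrt_pos.2 (by positivity)
  have hw0 : 0 < w := Real.sqrt_pos.2 (by positivity)
  have hP : w ≤ 2 * (y * z) := aux_peetre t s
  have hysq : y ^ 2 = 1 + (t - s) ^ 2 := Real.sq_sqrt (by positivity)
  have hty : t - s ≤ y := Real.le_sqrt_of_sq_le (by linarith)
  have hz' : z ^ (-σ) ≤ 2 ^ σ * y ^ σ * w ^ (-σ) := by
    have h1 : w ^ σ ≤ 2 ^ σ * (y ^ σ * z ^ σ) := by
      rw [← Real.mul_rpow hy0.le hz0.le, ← Real.mul_rpow (by norm_num) (by positivity)]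
      exact Real.rpow_le_rpow hw0.le hP (by linarith)
    have hzs : 0 < z ^ σ := Real.rpow_pos_of_pos hz0 σ
    have hws : 0 < w ^ σ := Real.rpow_pos_of_pos hw0 σ
    rw [Real.rpow_neg hz0.le, Real.rpow_neg hw0.le, ← div_eq_mul_inv, le_div_iff₀ hws,
      inv_mul_le_iff₀ hzs]
    linarith
  have hys : 0 < y ^ σ := Real.rpow_pos_of_pos hy0 σ
  have hws : 0 < w ^ (-σ) := Real.rpow_pos_of_pos hw0 _
  have h3 : y ^ (-(σ + 3)) = (y ^ σ * y ^ 3)⁻¹ := by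
    rw [Real.rpow_neg hy0.le, Real.rpow_add hy0]
    norm_cast
  calc _ ≤ y * (K * y ^ (-(σ + 3))) * (2 ^ σ * y ^ σ * w ^ (-σ)) := by
        have := h y hy1
        have : 0 ≤ t - s := by linarith
        gcongr
    _ = _ := by
        rw [h3, ← hysq]
        field_simp

/-- For `δ ∈ (0,1)`, `σ > 1`, `θ > 0`, there is `C > 0` such that
for every `t > 0`,
`∫₀ᵗ (t−s) e^{−θ⟨t−s⟩^{1−δ}} ⟨s⟩^{−σ} ds ≤ C ⟨t⟩^{−σ}`, where `⟨x⟩ = √(1+x²)`. -/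
theorem convolution_stretched_exponential_bound
    (δ σ θ : ℝ) (hδ0 : 0 < δ) (hδ1 : δ < 1) (hσ : 1 < σ) (hθ : 0 < θ) :
    ∃ C : ℝ, 0 < C ∧ ∀ t : ℝ, 0 < t →
      (∫ s in (0:ℝ)..t, (t - s) *
          Real.exp (-θ * (Real.sqrt (1 + (t - s) ^ 2)) ^ (1 - δ)) *
          (Real.sqrt (1 + s ^ 2)) ^ (-σ)) ≤
        C * (Real.sqrt (1 + t ^ 2)) ^ (-σ) := by
  obtain ⟨K, hK, h⟩ := aux_exp_bound (1 - δ) (σ + 3) θ (by linarith) hθ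
  have hpos : ∀ x : ℝ, 0 < Real.sqrt (1 + x ^ 2) := fun x => Real.sqrt_pos.2 (by positivity)
  refine ⟨K * 2 ^ σ * 2, by positivity, fun t ht => ?_⟩
  have hden : ∀ x : ℝ, 1 + (t - x) ^ 2 ≠ 0 := fun x => by positivity
  calc _ ≤ ∫ s in (0:ℝ)..t,
        (K * 2 ^ σ * (Real.sqrt (1 + t ^ 2)) ^ (-σ)) * (1 / (1 + (t - s) ^ 2)) := by
        apply intervalIntegral.integral_mono_on ht.le
        · apply Continuous.intervalIntegrable
          refine Continuous.mul (Continuous.mul (by fun_prop) (Real.continuous_exp.comp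
            (continuous_const.mul ?_))) ?_
          · exact Continuous.rpow_const (by fun_prop) fun x => Or.inl (hpos _).ne'
          · exact Continuous.rpow_const (by fun_prop) fun x => Or.inl (hpos _).ne'
        · apply Continuous.intervalIntegrable
          exact continuous_const.mul (continuous_const.div (by fun_prop) hden)
        · intro s hs
          exact aux_pointwise (1 - δ) σ θ K t s hσ hK hs.2 h
    _ = (K * 2 ^ σ * (Real.sqrt (1 + t ^ 2)) ^ (-σ)) * Real.arctan t := by
        rw [intervalIntegral.integral_const_mul,
          intervalIntegral.integral_comp_sub_left (fun u : ℝ => 1 / (1 + u ^ 2)) t]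
        simp
    _ ≤ (K * 2 ^ σ * (Real.sqrt (1 + t ^ 2)) ^ (-σ)) * 2 := by
        have h1 : Real.arctan t ≤ 2 := by
          linarith [Real.arctan_lt_pi_div_two t, Real.pi_le_four]
        have := Real.rpow_pos_of_pos (hpos t) (-σ)
        gcongr
    _ = _ := by ring
end
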